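/- Let L be a vector sublattice of ℝ^Ω containing 1 and φ a positive linear functional on L. Then lim_n φ(f_n) = 0 for every sequence (f_n) in L decreasing pointwise to 0, if and only if φ admits a representing measure m (φ(f) = φ(1)m(f) for f ∈ L, L ⊆ L(m), m a finitely additive probability when φ(1)=1) whose restriction to the σ-algebra generated by L is countably additive. -/

import Mathlib

open Filter Set

/-- A positive finitely additive set function on `2^Ω`. -/
structure FinAddMeasure (Ω : Type*) where
  μ : Set Ω → ℝ
  nonneg : ∀ E, 0 ≤ μ E
  empty : μ ∅ = 0
  add : ∀ E F : Set Ω, Disjoint E F → μ (E ∪ F) = μ E + μ F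

/-- A finitely additive probability on `2^Ω`. -/
structure FinAddProb (Ω : Type*) extends FinAddMeasure Ω where
  total : μ Set.univ = 1

/-- Lower (simple-function) sums for `f` relative to a set function `μ` defined
on the sets of the family `A`: sums `∑ aᵢ μ(Eᵢ)` with `aᵢ ≥ 0`, `Eᵢ ∈ A` and
`∑ aᵢ 1_{Eᵢ} ≤ f` pointwise. -/
def lowerSums {Ω : Type*} (A : Set (Set Ω)) (μ : Set Ω → ℝ) (f : Ω → ℝ) : Set ℝ :=
  { r | ∃ (n : ℕ) (a : Fin n → ℝ) (E : Fin n → Set Ω),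
      (∀ i, 0 ≤ a i) ∧ (∀ i, E i ∈ A) ∧
      (∀ ω, (∑ i, a i * (E i).indicator (fun _ => (1 : ℝ)) ω) ≤ f ω) ∧
      r = ∑ i, a i * μ (E i) }

/-- `f` is integrable with respect to `μ` (restricted to the family `A`):
the lower sums of the positive and of the negative part are bounded above. -/
def FAIntegrableOn {Ω : Type*} (A : Set (Set Ω)) (μ : Set Ω → ℝ) (f : Ω → ℝ) : Prop :=
  BddAbove (lowerSums A μ (fun ω => max (f ω) 0)) ∧
  BddAbove (lowerSums A μ (fun ω => max (-(f ω)) 0))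

/-- The finitely additive integral `μ(f) = μ(f⁺) - μ(f⁻)` obtained from lower sums. -/
noncomputable def faIntOn {Ω : Type*} (A : Set (Set Ω)) (μ : Set Ω → ℝ) (f : Ω → ℝ) : ℝ :=
  sSup (lowerSums A μ (fun ω => max (f ω) 0)) -
    sSup (lowerSums A μ (fun ω => max (-(f ω)) 0))

/-- Integrability with respect to a finitely additive measure on all of `2^Ω`. -/
def FAIntegrable {Ω : Type*} (m : FinAddMeasure Ω) (f : Ω → ℝ) : Prop :=
  FAIntegrableOn Set.univ m.μ f

/-- The integral with respect to a finitely additive measure on all of `2^Ω`. -/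
noncomputable def faInt {Ω : Type*} (m : FinAddMeasure Ω) (f : Ω → ℝ) : ℝ :=
  faIntOn Set.univ m.μ f

open MeasureTheory
open scoped ENNReal NNReal

namespace FinAddMeasure

variable {Ω : Type*}

theorem sum_inter_nonneg (m : FinAddMeasure Ω) {ι : Type*} (s : Finset ι) (a : ι → ℝ)
    (E : ι → Set Ω) (c : ℝ) (B : Set Ω)
    (h : ∀ ω ∈ B, 0 ≤ (∑ i ∈ s, a i * (E i).indicator (fun _ => (1 : ℝ)) ω) + c) :
    0 ≤ (∑ i ∈ s, a i * m.μ (E i ∩ B)) + c * m.μ B := by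
  classical
  induction s using Finset.induction_on generalizing c B with
  | empty =>
    rcases B.eq_empty_or_nonempty with rfl | ⟨ω, hω⟩
    · simp [m.empty]
    · simpa using mul_nonneg (by simpa using h ω hω) (m.nonneg B)
  | insert j s hj ih =>
    have hsplit : ∀ F : Set Ω, m.μ (F ∩ B) = m.μ (F ∩ (B ∩ E j)) + m.μ (F ∩ (B \ E j)) := by
      intro F
      rw [← m.add _ _ (disjoint_sdiff_right.mono
        (inter_subset_right.trans inter_subset_right) inter_subset_right),
        ← inter_union_distrib_left, inter_union_sdiff]
    have h_in := ih (c + a j) (B ∩ E j) fun ω hω => by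
      have := h ω hω.1
      rw [Finset.sum_insert hj, indicator_of_mem hω.2] at this
      linarith
    have h_out := ih c (B \ E j) fun ω hω => by
      have := h ω hω.1
      rw [Finset.sum_insert hj, indicator_of_notMem hω.2] at this
      linarith
    have hB := hsplit univ
    simp only [univ_inter] at hB
    rw [Finset.sum_insert hj, hB, Finset.sum_congr rfl fun i _ => by rw [hsplit (E i)],
      inter_comm (E j) B]
    simp only [mul_add, Finset.sum_add_distrib]
    linarith

theorem sum_le_sum_of_indicator_le (m : FinAddMeasure Ω) {ι κ : Type*} (s : Finset ι)
    (t : Finset κ) (a : ι → ℝ) (E : ι → Set Ω) (b : κ → ℝ) (F : κ → Set Ω)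
    (h : ∀ ω, (∑ i ∈ s, a i * (E i).indicator (fun _ => (1 : ℝ)) ω) ≤
      ∑ j ∈ t, b j * (F j).indicator (fun _ => (1 : ℝ)) ω) :
    (∑ i ∈ s, a i * m.μ (E i)) ≤ ∑ j ∈ t, b j * m.μ (F j) := by
  have := m.sum_inter_nonneg (s.disjSum t) (Sum.elim (fun i => -a i) b) (Sum.elim E F) 0 univ
    fun ω _ => by
      have := h ω
      simp only [Finset.sum_disjSum, Sum.elim_inl, Sum.elim_inr, neg_mul, Finset.sum_neg_distrib]
      linarith
  simp only [Finset.sum_disjSum, Sum.elim_inl, Sum.elim_inr, neg_mul, Finset.sum_neg_distrib,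
    inter_univ] at this
  linarith

end FinAddMeasure

theorem sum_mem_lowerSums {Ω ι : Type*} {μ : Set Ω → ℝ} {f : Ω → ℝ} (s : Finset ι)
    (a : ι → ℝ) (E : ι → Set Ω) (ha : ∀ i ∈ s, 0 ≤ a i)
    (h : ∀ ω, (∑ i ∈ s, a i * (E i).indicator (fun _ => (1 : ℝ)) ω) ≤ f ω) :
    (∑ i ∈ s, a i * μ (E i)) ∈ lowerSums univ μ f := by
  have key : ∀ g : ι → ℝ, (∑ i, g (s.equivFin.symm i)) = ∑ i ∈ s, g i := fun g => by
    rw [Equiv.sum_comp s.equivFin.symm (fun i : s => g i), Finset.sum_coe_sort]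
  refine ⟨s.card, fun i => a (s.equivFin.symm i), fun i => E (s.equivFin.symm i),
    fun i => ha _ (s.equivFin.symm i).2, fun _ => mem_univ _, fun ω => ?_, ?_⟩
  · exact (key fun i => a i * (E i).indicator (fun _ => (1 : ℝ)) ω).trans_le (h ω)
  · exact (key fun i => a i * μ (E i)).symm

theorem zero_mem_lowerSums {Ω : Type*} {μ : Set Ω → ℝ} {f : Ω → ℝ} (hf : ∀ ω, 0 ≤ f ω) :
    (0 : ℝ) ∈ lowerSums univ μ f := by
  simpa using sum_mem_lowerSums (μ := μ) (∅ : Finset ℕ) 0 (fun _ => ∅) (by simp) (by simpa using hf)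

theorem MeasureTheory.SimpleFunc.sum_range_mul_indicator {Ω : Type*} [MeasurableSpace Ω]
    (t : SimpleFunc Ω ℝ≥0) (ω : Ω) :
    (∑ v ∈ t.range, (v : ℝ) * (t ⁻¹' {v}).indicator (fun _ => (1 : ℝ)) ω) = t ω := by
  rw [Finset.sum_eq_single_of_mem (t ω) (t.mem_range_self ω)]
  · simp
  · intro v _ hv
    rw [indicator_of_notMem (by simpa using hv.symm), mul_zero]

section Restriction

variable {Ω : Type*} [MeasurableSpace Ω] {m : FinAddMeasure Ω} {μ : Measure Ω}

theorem lintegral_simpleFunc_eq (hm : ∀ E, MeasurableSet E → μ E = ENNReal.ofReal (m.μ E))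
    (t : SimpleFunc Ω ℝ≥0) :
    (t.map ((↑) : ℝ≥0 → ℝ≥0∞)).lintegral μ =
      ENNReal.ofReal (∑ v ∈ t.range, (v : ℝ) * m.μ (t ⁻¹' {v})) := by
  rw [SimpleFunc.map_lintegral, ENNReal.ofReal_sum_of_nonneg fun v _ =>
    mul_nonneg v.2 (m.nonneg _)]
  refine Finset.sum_congr rfl fun v _ => ?_
  rw [ENNReal.ofReal_mul v.coe_nonneg, hm _ (t.measurableSet_fiber v), ENNReal.ofReal_coe_nnreal]

theorem lintegral_le_of_mem_upperBounds
    (hm : ∀ E, MeasurableSet E → μ E = ENNReal.ofReal (m.μ E)) {f : Ω → ℝ} (hf : ∀ ω, 0 ≤ f ω)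
    {C : ℝ} (hC : C ∈ upperBounds (lowerSums univ m.μ f)) :
    ∫⁻ ω, ENNReal.ofReal (f ω) ∂μ ≤ ENNReal.ofReal C := by
  rw [lintegral_eq_nnreal]
  refine iSup₂_le fun t ht => ?_
  rw [lintegral_simpleFunc_eq hm]
  refine ENNReal.ofReal_le_ofReal (hC (sum_mem_lowerSums _ _ _ (fun v _ => v.2) fun ω => ?_))
  rw [t.sum_range_mul_indicator ω]
  have := ht ω
  rwa [← ENNReal.ofReal_coe_nnreal, ENNReal.ofReal_le_ofReal_iff (hf ω)] at this

theorem ofReal_le_lintegral_of_mem_lowerSums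
    (hm : ∀ E, MeasurableSet E → μ E = ENNReal.ofReal (m.μ E)) {f : Ω → ℝ} (hf : Measurable f)
    {r : ℝ} (hr : r ∈ lowerSums univ m.μ f) :
    ENNReal.ofReal r ≤ ∫⁻ ω, ENNReal.ofReal (f ω) ∂μ := by
  classical
  obtain ⟨n, a, E, ha, -, hle, rfl⟩ := hr
  let c : Finset (Fin n) → ℝ≥0 := fun S => ∑ i ∈ S, (a i).toNNReal
  have hcs : ∀ S, MeasurableSet {ω | (c S : ℝ) ≤ f ω} := fun S =>
    measurableSet_le measurable_const hf
  let t : SimpleFunc Ω ℝ≥0 := Finset.univ.sup fun S =>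
    (SimpleFunc.const Ω (c S)).restrict {ω | (c S : ℝ) ≤ f ω}
  have ht : ∀ ω, t ω = Finset.univ.sup fun S => {ω | (c S : ℝ) ≤ f ω}.indicator
      (fun _ => c S) ω := fun ω => by
    simp only [t, SimpleFunc.finset_sup_apply]
    exact Finset.sup_congr rfl fun S _ => by rw [SimpleFunc.restrict_apply _ (hcs S)]; rfl
  have htf : ∀ ω, ((t ω : ℝ≥0) : ℝ≥0∞) ≤ ENNReal.ofReal (f ω) := fun ω => by
    rw [ENNReal.ofReal, ENNReal.coe_le_coe, ht]
    refine Finset.sup_le fun S _ => ?_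
    by_cases h : (c S : ℝ) ≤ f ω
    · rw [indicator_of_mem (by exact h)]
      exact NNReal.le_toNNReal_of_coe_le h
    · rw [indicator_of_notMem (by exact h)]
      exact zero_le
  have hst : ∀ ω, (∑ i, a i * (E i).indicator (fun _ => (1 : ℝ)) ω) ≤ t ω := fun ω => by
    have hc : (∑ i, a i * (E i).indicator (fun _ => (1 : ℝ)) ω) =
        c (Finset.univ.filter fun i => ω ∈ E i) := by
      simp only [c, NNReal.coe_sum, Real.coe_toNNReal _ (ha _)]
      simp only [Finset.sum_filter, indicator_apply, mul_ite, mul_one, mul_zero]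
    have hmem : (c (Finset.univ.filter fun i => ω ∈ E i) : ℝ) ≤ f ω := hc ▸ hle ω
    rw [hc, NNReal.coe_le_coe, ht]
    refine le_trans ?_ (Finset.le_sup (Finset.mem_univ (Finset.univ.filter fun i => ω ∈ E i)))
    rw [indicator_of_mem (by exact hmem)]
  calc ENNReal.ofReal (∑ i, a i * m.μ (E i))
      ≤ ENNReal.ofReal (∑ v ∈ t.range, (v : ℝ) * m.μ (t ⁻¹' {v})) :=
        ENNReal.ofReal_le_ofReal (m.sum_le_sum_of_indicator_le _ _ _ _ _ _ fun ω => by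
          rw [t.sum_range_mul_indicator ω]; exact hst ω)
    _ = (t.map ((↑) : ℝ≥0 → ℝ≥0∞)).lintegral μ := (lintegral_simpleFunc_eq hm t).symm
    _ = ∫⁻ ω, (t.map ((↑) : ℝ≥0 → ℝ≥0∞)) ω ∂μ := (SimpleFunc.lintegral_eq_lintegral _ _).symm
    _ ≤ ∫⁻ ω, ENNReal.ofReal (f ω) ∂μ := lintegral_mono fun ω => htf ω

theorem bddAbove_lowerSums_iff
    (hm : ∀ E, MeasurableSet E → μ E = ENNReal.ofReal (m.μ E)) {f : Ω → ℝ} (hf : Measurable f)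
    (hf0 : ∀ ω, 0 ≤ f ω) :
    BddAbove (lowerSums univ m.μ f) ↔ ∫⁻ ω, ENNReal.ofReal (f ω) ∂μ ≠ ∞ := by
  constructor
  · rintro ⟨C, hC⟩
    exact ((lintegral_le_of_mem_upperBounds hm hf0 hC).trans_lt ENNReal.ofReal_lt_top).ne
  · intro h
    exact ⟨_, fun r hr => (ENNReal.ofReal_le_iff_le_toReal h).1
      (ofReal_le_lintegral_of_mem_lowerSums hm hf hr)⟩

theorem sSup_lowerSums
    (hm : ∀ E, MeasurableSet E → μ E = ENNReal.ofReal (m.μ E)) {f : Ω → ℝ} (hf : Measurable f)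
    (hf0 : ∀ ω, 0 ≤ f ω) (h : ∫⁻ ω, ENNReal.ofReal (f ω) ∂μ ≠ ∞) :
    sSup (lowerSums univ m.μ f) = (∫⁻ ω, ENNReal.ofReal (f ω) ∂μ).toReal := by
  have hbdd := (bddAbove_lowerSums_iff hm hf hf0).2 h
  have hmem := zero_mem_lowerSums (μ := m.μ) hf0
  refine le_antisymm (csSup_le ⟨0, hmem⟩ fun r hr => (ENNReal.ofReal_le_iff_le_toReal h).1
      (ofReal_le_lintegral_of_mem_lowerSums hm hf hr)) ?_
  exact ENNReal.toReal_le_of_le_ofReal (le_csSup hbdd hmem)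
    (lintegral_le_of_mem_upperBounds hm hf0 fun r hr => le_csSup hbdd hr)

private theorem ofReal_max_zero (x : ℝ) : ENNReal.ofReal (max x 0) = ENNReal.ofReal x := by
  rcases le_total x 0 with h | h <;> simp [h, ENNReal.ofReal_of_nonpos]

theorem faIntegrable_iff_integrable
    (hm : ∀ E, MeasurableSet E → μ E = ENNReal.ofReal (m.μ E)) {f : Ω → ℝ} (hf : Measurable f) :
    FAIntegrable m f ↔ Integrable f μ := by
  have hneg : Measurable fun ω => max (-f ω) 0 := hf.neg.max measurable_const
  rw [FAIntegrable, FAIntegrableOn,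
    bddAbove_lowerSums_iff hm (hf.max measurable_const) fun _ => le_max_right _ _,
    bddAbove_lowerSums_iff hm hneg fun _ => le_max_right _ _]
  constructor
  · rintro ⟨hp, hn⟩
    have hp' : Integrable (fun ω => max (f ω) 0) μ :=
      (lintegral_ofReal_ne_top_iff_integrable (hf.max measurable_const).aestronglyMeasurable
        (.of_forall fun _ => le_max_right _ _)).1 hp
    have hn' : Integrable (fun ω => max (-f ω) 0) μ :=
      (lintegral_ofReal_ne_top_iff_integrable hneg.aestronglyMeasurable
        (.of_forall fun _ => le_max_right _ _)).1 hn
    refine (hp'.sub hn').congr (.of_forall fun ω => ?_)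
    rcases le_total (f ω) 0 with h | h <;> simp [h]
  · intro h
    exact ⟨h.pos_part.lintegral_lt_top.ne, h.neg_part.lintegral_lt_top.ne⟩

theorem faInt_eq_integral
    (hm : ∀ E, MeasurableSet E → μ E = ENNReal.ofReal (m.μ E)) {f : Ω → ℝ} (hf : Measurable f)
    (hfi : Integrable f μ) : faInt m f = ∫ ω, f ω ∂μ := by
  have hneg : Measurable fun ω => max (-f ω) 0 := hf.neg.max measurable_const
  rw [faInt, faIntOn,
    sSup_lowerSums hm (hf.max measurable_const) (fun _ => le_max_right _ _)
      hfi.pos_part.lintegral_lt_top.ne,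
    sSup_lowerSums hm hneg (fun _ => le_max_right _ _)
      hfi.neg_part.lintegral_lt_top.ne,
    integral_eq_lintegral_pos_part_sub_lintegral_neg_part hfi]
  simp only [ofReal_max_zero]

end Restriction

section Extension

/-- The space of bounded real functions on `Ω`. -/
def boundedFunctions (Ω : Type*) : Submodule ℝ (Ω → ℝ) where
  carrier := {f | ∃ C, ∀ ω, |f ω| ≤ C}
  zero_mem' := ⟨0, by simp⟩
  add_mem' := by
    rintro f g ⟨C, hC⟩ ⟨D, hD⟩
    exact ⟨C + D, fun ω => (abs_add_le _ _).trans (add_le_add (hC ω) (hD ω))⟩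
  smul_mem' := by
    rintro c f ⟨C, hC⟩
    refine ⟨|c| * C, fun ω => ?_⟩
    rw [Pi.smul_apply, smul_eq_mul, abs_mul]
    exact mul_le_mul_of_nonneg_left (hC ω) (abs_nonneg c)

theorem indicator_one_mem_boundedFunctions {Ω : Type*} (E : Set Ω) :
    E.indicator (fun _ => (1 : ℝ)) ∈ boundedFunctions Ω :=
  ⟨1, fun ω => by by_cases h : ω ∈ E <;> simp [h]⟩

/-- The cone of nonnegative bounded functions. -/
def nonnegBoundedFunctions (Ω : Type*) : PointedCone ℝ (boundedFunctions Ω) where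
  carrier := {f | ∀ ω, 0 ≤ f.1 ω}
  zero_mem' := fun _ => le_rfl
  add_mem' := fun hf hg ω => add_nonneg (hf ω) (hg ω)
  smul_mem' := fun c _ hf ω => mul_nonneg c.2 (hf ω)

variable {Ω : Type*} [MeasurableSpace Ω]

theorem integrable_of_mem_boundedFunctions (μ : Measure Ω) [IsFiniteMeasure μ] {f : Ω → ℝ}
    (hb : f ∈ boundedFunctions Ω) (hf : Measurable f) : Integrable f μ := by
  obtain ⟨C, hC⟩ := hb
  exact Integrable.of_bound hf.aestronglyMeasurable C (.of_forall hC)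

/-- The integral as a linear functional on the bounded measurable functions. -/
noncomputable def integralOnBounded (μ : Measure Ω) [IsFiniteMeasure μ] :
    boundedFunctions Ω →ₗ.[ℝ] ℝ where
  domain :=
    { carrier := {f | Measurable f.1}
      zero_mem' := measurable_const
      add_mem' := fun hf hg => hf.add hg
      smul_mem' := fun c _ hf => hf.const_smul c }
  toFun :=
    { toFun := fun f => ∫ ω, f.1.1 ω ∂μ
      map_add' := fun f g => integral_add (integrable_of_mem_boundedFunctions μ f.1.2 f.2)
        (integrable_of_mem_boundedFunctions μ g.1.2 g.2)
      map_smul' := fun c _ => integral_const_mul c _ }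

/-- Every finite measure extends to a finitely additive measure on all subsets. -/
theorem exists_finAddMeasure_extension (μ : Measure Ω) [IsFiniteMeasure μ] :
    ∃ m : FinAddMeasure Ω, ∀ E, MeasurableSet E → μ E = ENNReal.ofReal (m.μ E) := by
  obtain ⟨g, hg, hpos⟩ := riesz_extension (nonnegBoundedFunctions Ω) (integralOnBounded μ)
    (fun _ hf => integral_nonneg hf) (by
      rintro ⟨y, C, hC⟩
      exact ⟨⟨⟨fun _ => C, |C|, fun _ => le_rfl⟩, measurable_const⟩,
        fun ω => show 0 ≤ C + y ω by linarith [neg_abs_le (y ω), hC ω]⟩)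
  let χ : Set Ω → boundedFunctions Ω := fun E => ⟨_, indicator_one_mem_boundedFunctions E⟩
  refine ⟨⟨fun E => g (χ E), fun E => hpos _ fun ω => indicator_nonneg (fun _ _ => zero_le_one) ω,
    ?_, ?_⟩, fun E hE => ?_⟩
  · rw [show χ ∅ = 0 from Subtype.ext (indicator_empty _), map_zero]
  · intro E F hEF
    rw [← map_add]
    congr 1
    exact Subtype.ext (indicator_union_of_disjoint hEF _)
  · have h : g (χ E) = ∫ ω, E.indicator (fun _ => (1 : ℝ)) ω ∂μ :=
      hg ⟨χ E, measurable_const.indicator hE⟩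
    change μ E = ENNReal.ofReal (g (χ E))
    rw [h, integral_indicator_const _ hE, smul_eq_mul, mul_one, ofReal_measureReal]

end Extension

/-- `φ` restricts to a positive linear functional on the vector lattice `L`, which contains `1`. -/
structure IsPositiveOnLattice {Ω : Type*} (L : Set (Ω → ℝ)) (φ : (Ω → ℝ) → ℝ) : Prop where
  add_mem : ∀ f ∈ L, ∀ g ∈ L, f + g ∈ L
  smul_mem : ∀ (c : ℝ), ∀ f ∈ L, c • f ∈ L
  max_mem : ∀ f ∈ L, ∀ g ∈ L, (fun ω => max (f ω) (g ω)) ∈ L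
  one_mem : (fun _ => (1 : ℝ)) ∈ L
  map_add : ∀ f ∈ L, ∀ g ∈ L, φ (f + g) = φ f + φ g
  map_smul : ∀ (c : ℝ), ∀ f ∈ L, φ (c • f) = c * φ f
  nonneg : ∀ f ∈ L, (∀ ω, 0 ≤ f ω) → 0 ≤ φ f

/-- `φ` tends to `0` along sequences of `L` decreasing pointwise to `0`. -/
def IsDaniell {Ω : Type*} (L : Set (Ω → ℝ)) (φ : (Ω → ℝ) → ℝ) : Prop :=
  ∀ fs : ℕ → Ω → ℝ, (∀ n, fs n ∈ L) → (∀ n ω, fs (n + 1) ω ≤ fs n ω) →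
    (∀ ω, Tendsto (fun n => fs n ω) atTop (nhds 0)) → Tendsto (fun n => φ (fs n)) atTop (nhds 0)

/-- The σ-algebra generated by a set of real functions. -/
abbrev generatedSigmaAlgebra {Ω : Type*} (L : Set (Ω → ℝ)) : MeasurableSpace Ω :=
  ⨆ f ∈ L, MeasurableSpace.comap f Real.measurableSpace

theorem measurable_of_mem {Ω : Type*} {L : Set (Ω → ℝ)} {f : Ω → ℝ} (hf : f ∈ L) :
    Measurable[generatedSigmaAlgebra L] f :=
  Measurable.of_comap_le (le_iSup₂ (f := fun g (_ : g ∈ L) =>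
    MeasurableSpace.comap g Real.measurableSpace) f hf)

namespace IsPositiveOnLattice

variable {Ω : Type*} {L : Set (Ω → ℝ)} {φ : (Ω → ℝ) → ℝ}

section Algebra

variable (h : IsPositiveOnLattice L φ)
include h

theorem const_mem (c : ℝ) : (fun _ => c) ∈ L := by
  simpa [Pi.smul_def] using h.smul_mem c _ h.one_mem

theorem map_const (c : ℝ) : φ (fun _ => c) = c * φ fun _ => 1 := by
  rw [← h.map_smul c _ h.one_mem]
  simp [Pi.smul_def]

theorem map_zero : φ 0 = 0 :=
  (h.map_const 0).trans (zero_mul _)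

theorem neg_mem {f : Ω → ℝ} (hf : f ∈ L) : (fun ω => -f ω) ∈ L := by
  simpa [Pi.smul_def, -neg_smul] using h.smul_mem (-1) f hf

theorem sub_mem {f g : Ω → ℝ} (hf : f ∈ L) (hg : g ∈ L) : (fun ω => f ω - g ω) ∈ L := by
  simpa [sub_eq_add_neg, Pi.add_def] using h.add_mem f hf _ (h.neg_mem hg)

theorem map_sub {f g : Ω → ℝ} (hf : f ∈ L) (hg : g ∈ L) :
    φ (fun ω => f ω - g ω) = φ f - φ g := by
  have := h.map_add _ (h.sub_mem hf hg) _ hg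
  rw [show (fun ω => f ω - g ω) + g = f by ext; simp] at this
  linarith

theorem min_mem {f g : Ω → ℝ} (hf : f ∈ L) (hg : g ∈ L) : (fun ω => min (f ω) (g ω)) ∈ L := by
  have := h.neg_mem (h.max_mem _ (h.neg_mem hf) _ (h.neg_mem hg))
  simpa [max_neg_neg] using this

theorem posPart_sub_mem {f g : Ω → ℝ} (hf : f ∈ L) (hg : g ∈ L) :
    (fun ω => max (f ω - g ω) 0) ∈ L :=
  h.max_mem _ (h.sub_mem hf hg) _ (h.const_mem 0)

theorem mono {f g : Ω → ℝ} (hf : f ∈ L) (hg : g ∈ L) (hfg : ∀ ω, f ω ≤ g ω) : φ f ≤ φ g := by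
  have := h.nonneg _ (h.sub_mem hg hf) fun ω => sub_nonneg.2 (hfg ω)
  rw [h.map_sub hg hf] at this
  linarith

theorem sum_mem_and_map_sum {ι : Type*} (s : Finset ι) (f : ι → Ω → ℝ) (hf : ∀ i ∈ s, f i ∈ L) :
    (∑ i ∈ s, f i) ∈ L ∧ φ (∑ i ∈ s, f i) = ∑ i ∈ s, φ (f i) := by
  classical
  induction s using Finset.induction_on with
  | empty => exact ⟨h.const_mem 0, by simpa using h.map_zero⟩
  | insert j s hj ih =>
    obtain ⟨hmem, hmap⟩ := ih fun i hi => hf i (Finset.mem_insert_of_mem hi)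
    have hfj := hf j (Finset.mem_insert_self j s)
    rw [Finset.sum_insert hj, Finset.sum_insert hj, h.map_add _ hfj _ hmem, hmap]
    exact ⟨h.add_mem _ hfj _ hmem, rfl⟩

end Algebra

/-- Increasing sequences of nonnegative elements of `L` that eventually exceed `1` on `A`. -/
structure IsCover (L : Set (Ω → ℝ)) (A : Set Ω) (F : ℕ → Ω → ℝ) : Prop where
  mem : ∀ n, F n ∈ L
  nonneg : ∀ n ω, 0 ≤ F n ω
  mono : ∀ ω, Monotone fun n => F n ω
  exists_one_le : ∀ ω ∈ A, ∃ n, 1 ≤ F n ω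

/-- The outer set function induced by `φ` through covers by increasing sequences. -/
noncomputable def outerValue (L : Set (Ω → ℝ)) (φ : (Ω → ℝ) → ℝ) (A : Set Ω) : ℝ≥0∞ :=
  ⨅ (F : ℕ → Ω → ℝ) (_ : IsCover L A F), ⨆ n, ENNReal.ofReal (φ (F n))

theorem outerValue_le {A : Set Ω} {F : ℕ → Ω → ℝ} (hF : IsCover L A F) :
    outerValue L φ A ≤ ⨆ n, ENNReal.ofReal (φ (F n)) :=
  iInf₂_le F hF

theorem outerValue_le_of_one_le {A : Set Ω} {f : Ω → ℝ} (hf : f ∈ L) (hf0 : ∀ ω, 0 ≤ f ω)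
    (hA : ∀ ω ∈ A, 1 ≤ f ω) : outerValue L φ A ≤ ENNReal.ofReal (φ f) :=
  (outerValue_le (F := fun _ => f)
    ⟨fun _ => hf, fun _ => hf0, fun _ => monotone_const, fun ω hω => ⟨0, hA ω hω⟩⟩).trans
    (iSup_le fun _ => le_rfl)

theorem outerValue_iUnion_le (h : IsPositiveOnLattice L φ) (s : ℕ → Set Ω) :
    outerValue L φ (⋃ i, s i) ≤ ∑' i, outerValue L φ (s i) := by
  refine ENNReal.le_of_forall_pos_le_add fun ε hε hfin => ?_
  obtain ⟨δ, hδ, hδε⟩ := ENNReal.exists_pos_sum_of_countable (ENNReal.coe_pos.2 hε).ne' ℕ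
  have hF : ∀ i, ∃ F, IsCover L (s i) F ∧
      (⨆ n, ENNReal.ofReal (φ (F n))) < outerValue L φ (s i) + δ i := fun i => by
    have hlt : outerValue L φ (s i) < outerValue L φ (s i) + δ i :=
      ENNReal.lt_add_right (ENNReal.ne_top_of_tsum_ne_top hfin.ne i) (ENNReal.coe_pos.2 (hδ i)).ne'
    simpa only [outerValue, iInf_lt_iff, exists_prop] using hlt
  choose F hFc hFlt using hF
  have hsum := fun n => h.sum_mem_and_map_sum (Finset.range (n + 1)) (fun i => F i n)
    fun i _ => (hFc i).mem n
  have hcov : IsCover L (⋃ i, s i) fun n => ∑ i ∈ Finset.range (n + 1), F i n := by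
    refine ⟨fun n => (hsum n).1, fun n ω => ?_, fun ω n k hnk => ?_, fun ω hω => ?_⟩
    · rw [Finset.sum_apply]
      exact Finset.sum_nonneg fun i _ => (hFc i).nonneg n ω
    · simp only [Finset.sum_apply]
      exact (Finset.sum_le_sum fun i _ => (hFc i).mono ω hnk).trans
        (Finset.sum_le_sum_of_subset_of_nonneg (Finset.range_mono (by omega))
          fun i _ _ => (hFc i).nonneg k ω)
    · obtain ⟨i, hi⟩ := mem_iUnion.1 hω
      obtain ⟨n, hn⟩ := (hFc i).exists_one_le ω hi
      refine ⟨max i n, ?_⟩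
      rw [Finset.sum_apply]
      exact (hn.trans ((hFc i).mono ω (le_max_right i n))).trans
        (Finset.single_le_sum (f := fun i' => F i' (max i n) ω)
          (fun j _ => (hFc j).nonneg _ ω) (Finset.mem_range.2 (by omega)))
  refine (outerValue_le hcov).trans (iSup_le fun n => ?_)
  rw [(hsum n).2, ENNReal.ofReal_sum_of_nonneg fun i _ =>
    h.nonneg _ ((hFc i).mem n) ((hFc i).nonneg n)]
  calc ∑ i ∈ Finset.range (n + 1), ENNReal.ofReal (φ (F i n))
      ≤ ∑ i ∈ Finset.range (n + 1), (outerValue L φ (s i) + δ i) :=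
        Finset.sum_le_sum fun i _ =>
          (le_iSup (fun n => ENNReal.ofReal (φ (F i n))) n).trans (hFlt i).le
    _ ≤ ∑' i, (outerValue L φ (s i) + δ i) := ENNReal.sum_le_tsum _
    _ = ∑' i, outerValue L φ (s i) + ∑' i, (δ i : ℝ≥0∞) := ENNReal.tsum_add
    _ ≤ ∑' i, outerValue L φ (s i) + ε := by gcongr

/-- The Daniell outer measure of `φ`. -/
noncomputable def daniellOuterMeasure (h : IsPositiveOnLattice L φ) : OuterMeasure Ω where
  measureOf := outerValue L φ
  empty := nonpos_iff_eq_zero.1 <| (outerValue_le_of_one_le (h.const_mem 0) (fun _ => le_rfl)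
    (by simp)).trans_eq (by rw [h.map_const]; simp)
  mono := fun hst => le_iInf₂ fun F hF => outerValue_le
    ⟨hF.mem, hF.nonneg, hF.mono, fun ω hω => hF.exists_one_le ω (hst hω)⟩
  iUnion_nat := fun s _ => h.outerValue_iUnion_le s

theorem isCaratheodory_pos (h : IsPositiveOnLattice L φ) {f : Ω → ℝ} (hf : f ∈ L)
    (hf0 : ∀ ω, 0 ≤ f ω) : MeasurableSet[h.daniellOuterMeasure.caratheodory] {ω | 0 < f ω} := by
  refine (OuterMeasure.isCaratheodory_iff_le _).2 fun A => ?_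
  change outerValue L φ _ + outerValue L φ _ ≤ outerValue L φ A
  refine le_iInf₂ fun F hF => ?_
  let u : ℕ → Ω → ℝ := fun k ω => min (k * f ω) 1
  have hu : ∀ k, u k ∈ L := fun k => h.min_mem (h.smul_mem k f hf) h.one_mem
  have hu0 : ∀ k ω, 0 ≤ u k ω := fun k ω =>
    le_min (mul_nonneg k.cast_nonneg (hf0 ω)) zero_le_one
  have humono : ∀ ω, Monotone fun k => u k ω := fun ω k l hkl =>
    min_le_min_right _ (mul_le_mul_of_nonneg_right (Nat.cast_le.2 hkl) (hf0 ω))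
  have hin : IsCover L (A ∩ {ω | 0 < f ω}) fun k ω => min (F k ω) (u k ω) := by
    refine ⟨fun k => h.min_mem (hF.mem k) (hu k), fun k ω => le_min (hF.nonneg k ω) (hu0 k ω),
      fun ω k l hkl => min_le_min (hF.mono ω hkl) (humono ω hkl), fun ω hω => ?_⟩
    obtain ⟨n, hn⟩ := hF.exists_one_le ω hω.1
    obtain ⟨k, hk⟩ := exists_nat_ge (1 / f ω)
    have hk' : 1 ≤ k * f ω := (div_le_iff₀ hω.2).1 hk
    exact ⟨max n k, le_min (hn.trans (hF.mono ω (le_max_left n k)))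
      ((le_min hk' le_rfl).trans (humono ω (le_max_right n k)))⟩
  have hout : ∀ k, IsCover L (A \ {ω | 0 < f ω}) fun n ω => max (F (n + k) ω - u k ω) 0 := by
    refine fun k => ⟨fun n => h.posPart_sub_mem (hF.mem _) (hu k), fun n ω => le_max_right _ _,
      fun ω n l hnl => max_le_max_right _ (sub_le_sub_right (hF.mono ω (by omega)) _),
      fun ω hω => ?_⟩
    obtain ⟨n, hn⟩ := hF.exists_one_le ω hω.1
    have hfω : f ω = 0 := le_antisymm (not_lt.1 hω.2) (hf0 ω)
    refine ⟨n, le_max_of_le_left ?_⟩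
    simpa [u, hfω] using hn.trans (hF.mono ω (Nat.le_add_right n k))
  refine (add_le_add_left (outerValue_le hin) _).trans ?_
  rw [ENNReal.iSup_add]
  refine iSup_le fun k => (add_le_add_right (outerValue_le (hout k)) _).trans ?_
  rw [ENNReal.add_iSup]
  refine iSup_le fun n => ?_
  have h1 := h.min_mem (hF.mem k) (hu k)
  have h2 := h.posPart_sub_mem (hF.mem (n + k)) (hu k)
  rw [← ENNReal.ofReal_add (h.nonneg _ h1 fun ω => le_min (hF.nonneg k ω) (hu0 k ω))
    (h.nonneg _ h2 fun ω => le_max_right _ _), ← h.map_add _ h1 _ h2]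
  refine (ENNReal.ofReal_le_ofReal (h.mono (h.add_mem _ h1 _ h2) (hF.mem (n + k)) fun ω => ?_)).trans
    (le_iSup (fun n => ENNReal.ofReal (φ (F n))) (n + k))
  have hmono : F k ω ≤ F (n + k) ω := hF.mono ω (Nat.le_add_left k n)
  rw [Pi.add_apply]
  rcases le_total (F (n + k) ω - u k ω) 0 with h0 | h0
  · rw [max_eq_right h0, add_zero]
    exact (min_le_left _ _).trans hmono
  · rw [max_eq_left h0]
    linarith [min_le_right (F k ω) (u k ω)]

theorem generatedSigmaAlgebra_le_caratheodory (h : IsPositiveOnLattice L φ) :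
    generatedSigmaAlgebra L ≤ h.daniellOuterMeasure.caratheodory := by
  refine iSup₂_le fun f hf => Measurable.comap_le (measurable_of_Ioi fun c => ?_)
  have := h.isCaratheodory_pos (h.posPart_sub_mem hf (h.const_mem c)) fun ω => le_max_right _ _
  simpa [preimage, Ioi] using this

/-- The Daniell measure of `φ` on the σ-algebra generated by `L`. -/
noncomputable def daniellMeasure (h : IsPositiveOnLattice L φ) :
    @Measure Ω (generatedSigmaAlgebra L) :=
  letI := generatedSigmaAlgebra L
  h.daniellOuterMeasure.toMeasure h.generatedSigmaAlgebra_le_caratheodory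

theorem daniellMeasure_apply (h : IsPositiveOnLattice L φ) {A : Set Ω}
    (hA : MeasurableSet[generatedSigmaAlgebra L] A) : h.daniellMeasure A = outerValue L φ A :=
  letI := generatedSigmaAlgebra L
  toMeasure_apply _ h.generatedSigmaAlgebra_le_caratheodory hA

theorem daniellMeasure_univ (h : IsPositiveOnLattice L φ) (hφ : IsDaniell L φ) :
    h.daniellMeasure univ = ENNReal.ofReal (φ fun _ => 1) := by
  rw [h.daniellMeasure_apply MeasurableSet.univ]
  refine le_antisymm (outerValue_le_of_one_le h.one_mem (fun _ => zero_le_one) fun _ _ => le_rfl)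
    (le_iInf₂ fun F hF => ?_)
  have hd := hφ (fun n ω => max (1 - F n ω) 0) (fun n => h.posPart_sub_mem h.one_mem (hF.mem n))
    (fun n ω => max_le_max_right _ (sub_le_sub_left (hF.mono ω n.le_succ) _)) fun ω => by
      obtain ⟨n, hn⟩ := hF.exists_one_le ω (mem_univ ω)
      refine tendsto_atTop_of_eventually_const (i₀ := n) fun k hk => ?_
      exact max_eq_right (by linarith [show F n ω ≤ F k ω from hF.mono ω hk])
  have hlim : Tendsto (fun n => (⨆ n, ENNReal.ofReal (φ (F n))) +
      ENNReal.ofReal (φ fun ω => max (1 - F n ω) 0)) atTop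
      (nhds ((⨆ n, ENNReal.ofReal (φ (F n))) + ENNReal.ofReal 0)) :=
    tendsto_const_nhds.add (ENNReal.tendsto_ofReal hd)
  rw [ENNReal.ofReal_zero, add_zero] at hlim
  refine ge_of_tendsto' hlim fun n => ?_
  have hmem := h.posPart_sub_mem h.one_mem (hF.mem n)
  calc ENNReal.ofReal (φ fun _ => 1)
      ≤ ENNReal.ofReal (φ (F n) + φ fun ω => max (1 - F n ω) 0) := by
        rw [← h.map_add _ (hF.mem n) _ hmem]
        refine ENNReal.ofReal_le_ofReal (h.mono h.one_mem (h.add_mem _ (hF.mem n) _ hmem)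
          fun ω => ?_)
        rw [Pi.add_apply]
        linarith [le_max_left (1 - F n ω) 0]
    _ ≤ ENNReal.ofReal (φ (F n)) + ENNReal.ofReal (φ fun ω => max (1 - F n ω) 0) :=
        ENNReal.ofReal_add_le
    _ ≤ _ := by
        gcongr
        exact le_iSup (fun n => ENNReal.ofReal (φ (F n))) n

theorem isFiniteMeasure_daniellMeasure (h : IsPositiveOnLattice L φ) :
    IsFiniteMeasure h.daniellMeasure := by
  refine ⟨?_⟩
  rw [h.daniellMeasure_apply MeasurableSet.univ]
  exact (outerValue_le_of_one_le h.one_mem (fun _ => zero_le_one) fun _ _ => le_rfl).trans_lt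
    ENNReal.ofReal_lt_top

theorem lintegral_le_add (h : IsPositiveOnLattice L φ) (n : ℕ) :
    ∀ f ∈ L, (∀ ω, 0 ≤ f ω) → (∀ ω, f ω ≤ n) →
      ∫⁻ ω, ENNReal.ofReal (f ω) ∂h.daniellMeasure ≤
        ENNReal.ofReal (φ f) + h.daniellMeasure {ω | 0 < f ω} := by
  let _ : MeasurableSpace Ω := generatedSigmaAlgebra L
  induction n with
  | zero =>
    intro f _ _ hfn
    simp [fun ω => ENNReal.ofReal_of_nonpos ((hfn ω).trans_eq Nat.cast_zero)]
  | succ n ih =>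
    intro f hf hf0 hfn
    have hu := h.min_mem hf h.one_mem
    have hv := h.posPart_sub_mem hf h.one_mem
    have hu0 : ∀ ω, 0 ≤ min (f ω) 1 := fun ω => le_min (hf0 ω) zero_le_one
    have hv0 : ∀ ω, 0 ≤ max (f ω - 1) 0 := fun ω => le_max_right _ _
    have hsum : ∀ ω, f ω = min (f ω) 1 + max (f ω - 1) 0 := fun ω => by
      rcases le_total (f ω) 1 with hω | hω <;> simp [hω]
    have hφ : φ f = (φ fun ω => min (f ω) 1) + φ fun ω => max (f ω - 1) 0 := by
      rw [← h.map_add _ hu _ hv]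
      exact congrArg φ (funext hsum)
    have hpos : MeasurableSet {ω | 0 < f ω} :=
      measurableSet_lt measurable_const (measurable_of_mem hf)
    have hmin : ∫⁻ ω, ENNReal.ofReal (min (f ω) 1) ∂h.daniellMeasure ≤
        h.daniellMeasure {ω | 0 < f ω} := by
      rw [← lintegral_indicator_one hpos]
      refine lintegral_mono fun ω => ?_
      by_cases hω : 0 < f ω
      · simp [hω]
      · simp [hω, ENNReal.ofReal_of_nonpos (not_lt.1 hω)]
    have hset : h.daniellMeasure {ω | 0 < max (f ω - 1) 0} ≤
        ENNReal.ofReal (φ fun ω => min (f ω) 1) := by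
      rw [h.daniellMeasure_apply (measurableSet_lt measurable_const (measurable_of_mem hv))]
      refine outerValue_le_of_one_le hu hu0 fun ω hω => le_min ?_ le_rfl
      have : 0 < f ω - 1 := by simpa using hω
      linarith
    calc ∫⁻ ω, ENNReal.ofReal (f ω) ∂h.daniellMeasure
        = ∫⁻ ω, ENNReal.ofReal (min (f ω) 1) ∂h.daniellMeasure +
            ∫⁻ ω, ENNReal.ofReal (max (f ω - 1) 0) ∂h.daniellMeasure := by
          rw [← lintegral_add_left (measurable_of_mem hu).ennreal_ofReal]
          refine lintegral_congr fun ω => ?_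
          rw [← ENNReal.ofReal_add (hu0 ω) (hv0 ω), ← hsum ω]
      _ ≤ h.daniellMeasure {ω | 0 < f ω} +
            (ENNReal.ofReal (φ fun ω => max (f ω - 1) 0) +
              ENNReal.ofReal (φ fun ω => min (f ω) 1)) :=
          add_le_add hmin ((ih _ hv hv0 fun ω => max_le
            (by have := hfn ω; push_cast at this; linarith) n.cast_nonneg).trans
              (add_le_add_right hset _))
      _ = ENNReal.ofReal (φ f) + h.daniellMeasure {ω | 0 < f ω} := by
          rw [hφ, ENNReal.ofReal_add (h.nonneg _ hu hu0) (h.nonneg _ hv hv0)]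
          ring

theorem integrable_of_bounded (h : IsPositiveOnLattice L φ) {f : Ω → ℝ} (hf : f ∈ L)
    (hf0 : ∀ ω, 0 ≤ f ω) {n : ℕ} (hfn : ∀ ω, f ω ≤ n) : Integrable f h.daniellMeasure :=
  let _ : MeasurableSpace Ω := generatedSigmaAlgebra L
  have := h.isFiniteMeasure_daniellMeasure
  Integrable.of_bound (measurable_of_mem hf).aestronglyMeasurable n
    (.of_forall fun ω => by rw [Real.norm_of_nonneg (hf0 ω)]; exact hfn ω)

theorem integral_le (h : IsPositiveOnLattice L φ) {f : Ω → ℝ} (hf : f ∈ L)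
    (hf0 : ∀ ω, 0 ≤ f ω) {n : ℕ} (hfn : ∀ ω, f ω ≤ n) :
    ∫ ω, f ω ∂h.daniellMeasure ≤ φ f := by
  let _ : MeasurableSpace Ω := generatedSigmaAlgebra L
  have := h.isFiniteMeasure_daniellMeasure
  have key : ∀ k : ℕ, k * ∫ ω, f ω ∂h.daniellMeasure ≤ k * φ f + h.daniellMeasure.real univ := by
    intro k
    have hk : (k : ℝ) • f ∈ L := h.smul_mem k f hf
    have hk0 : ∀ ω, 0 ≤ ((k : ℝ) • f) ω := fun ω => mul_nonneg k.cast_nonneg (hf0 ω)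
    have hkn : ∀ ω, ((k : ℝ) • f) ω ≤ (k * n : ℕ) := fun ω => by
      push_cast
      exact mul_le_mul_of_nonneg_left (hfn ω) k.cast_nonneg
    have hle := h.lintegral_le_add (k * n) _ hk hk0 hkn
    rw [← ofReal_integral_eq_lintegral_ofReal (h.integrable_of_bounded hk hk0 hkn)
      (.of_forall hk0)] at hle
    replace hle := hle.trans (add_le_add_right (measure_mono (subset_univ _)) _)
    rw [← ofReal_measureReal, ← ENNReal.ofReal_add (h.nonneg _ hk hk0) measureReal_nonneg,
      ENNReal.ofReal_le_ofReal_iff (add_nonneg (h.nonneg _ hk hk0) measureReal_nonneg),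
      h.map_smul k f hf] at hle
    rwa [← integral_const_mul]
  by_contra! hlt
  obtain ⟨k, hk⟩ := exists_nat_gt
    (h.daniellMeasure.real univ / (∫ ω, f ω ∂h.daniellMeasure - φ f))
  rw [div_lt_iff₀ (sub_pos.2 hlt)] at hk
  linarith [key k]

theorem integral_eq_of_bounded (h : IsPositiveOnLattice L φ) (hφ : IsDaniell L φ) {f : Ω → ℝ}
    (hf : f ∈ L) (hf0 : ∀ ω, 0 ≤ f ω) {n : ℕ} (hfn : ∀ ω, f ω ≤ n) :
    ∫ ω, f ω ∂h.daniellMeasure = φ f := by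
  let _ : MeasurableSpace Ω := generatedSigmaAlgebra L
  have := h.isFiniteMeasure_daniellMeasure
  refine le_antisymm (h.integral_le hf hf0 hfn) ?_
  have hc := h.integral_le (n := n) (h.sub_mem (h.const_mem n) hf) (fun ω => sub_nonneg.2 (hfn ω))
    fun ω => sub_le_self _ (hf0 ω)
  rw [integral_sub (integrable_const _) (h.integrable_of_bounded hf hf0 hfn), integral_const,
    h.map_sub (h.const_mem n) hf, h.map_const, measureReal_def, h.daniellMeasure_univ hφ,
    ENNReal.toReal_ofReal (h.nonneg _ h.one_mem fun _ => zero_le_one), smul_eq_mul] at hc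
  linarith

theorem lintegral_eq (h : IsPositiveOnLattice L φ) (hφ : IsDaniell L φ) {f : Ω → ℝ}
    (hf : f ∈ L) (hf0 : ∀ ω, 0 ≤ f ω) :
    ∫⁻ ω, ENNReal.ofReal (f ω) ∂h.daniellMeasure = ENNReal.ofReal (φ f) := by
  let _ : MeasurableSpace Ω := generatedSigmaAlgebra L
  have hu := fun n : ℕ => h.min_mem hf (h.const_mem n)
  have hu0 : ∀ (n : ℕ) ω, 0 ≤ min (f ω) n := fun n ω => le_min (hf0 ω) n.cast_nonneg
  have hev : ∀ ω, ∀ᶠ n : ℕ in atTop, f ω ≤ n := fun ω =>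
    tendsto_natCast_atTop_atTop.eventually_ge_atTop (f ω)
  have hintegral : ∀ n : ℕ, ∫⁻ ω, ENNReal.ofReal (min (f ω) n) ∂h.daniellMeasure =
      ENNReal.ofReal (φ fun ω => min (f ω) n) := fun n => by
    rw [← ofReal_integral_eq_lintegral_ofReal
      (h.integrable_of_bounded (hu n) (hu0 n) fun ω => min_le_right _ _) (.of_forall (hu0 n)),
      h.integral_eq_of_bounded hφ (hu n) (hu0 n) fun ω => min_le_right _ _]
  have hlim := lintegral_tendsto_of_tendsto_of_monotone (μ := h.daniellMeasure)
    (f := fun (n : ℕ) ω => ENNReal.ofReal (min (f ω) n)) (F := fun ω => ENNReal.ofReal (f ω))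
    (fun n => (measurable_of_mem (hu n)).ennreal_ofReal.aemeasurable)
    (.of_forall fun ω k l hkl => ENNReal.ofReal_le_ofReal
      (min_le_min_left _ (Nat.cast_le.2 hkl)))
    (.of_forall fun ω => tendsto_nhds_of_eventually_eq
      ((hev ω).mono fun n hn => by rw [min_eq_left hn]))
  simp only [hintegral] at hlim
  have hd := hφ (fun n ω => f ω - min (f ω) n) (fun n => h.sub_mem hf (hu n))
    (fun n ω => sub_le_sub_left (min_le_min_left _ (Nat.cast_le.2 n.le_succ)) _)
    (fun ω => tendsto_nhds_of_eventually_eq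
      ((hev ω).mono fun n hn => by rw [min_eq_left hn, sub_self]))
  simp only [h.map_sub hf (hu _)] at hd
  have hφlim : Tendsto (fun n : ℕ => φ fun ω => min (f ω) n) atTop (nhds (φ f)) := by
    simpa using (tendsto_const_nhds (x := φ f)).sub hd
  exact tendsto_nhds_unique hlim (ENNReal.tendsto_ofReal hφlim)

theorem integrable_and_integral_eq (h : IsPositiveOnLattice L φ) (hφ : IsDaniell L φ)
    {f : Ω → ℝ} (hf : f ∈ L) :
    Integrable f h.daniellMeasure ∧ ∫ ω, f ω ∂h.daniellMeasure = φ f := by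
  let _ : MeasurableSpace Ω := generatedSigmaAlgebra L
  have hnonneg : ∀ g ∈ L, (∀ ω, 0 ≤ g ω) →
      Integrable g h.daniellMeasure ∧ ∫ ω, g ω ∂h.daniellMeasure = φ g := fun g hg hg0 => by
    have hl := h.lintegral_eq hφ hg hg0
    refine ⟨(lintegral_ofReal_ne_top_iff_integrable (measurable_of_mem hg).aestronglyMeasurable
      (.of_forall hg0)).1 (hl ▸ ENNReal.ofReal_ne_top), ?_⟩
    rw [integral_eq_lintegral_of_nonneg_ae (.of_forall hg0)
      (measurable_of_mem hg).aestronglyMeasurable, hl, ENNReal.toReal_ofReal (h.nonneg g hg hg0)]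
  have hp := h.max_mem _ hf _ (h.const_mem 0)
  have hn := h.max_mem _ (h.neg_mem hf) _ (h.const_mem 0)
  obtain ⟨hpi, hpe⟩ := hnonneg _ hp fun ω => le_max_right _ _
  obtain ⟨hni, hne⟩ := hnonneg _ hn fun ω => le_max_right _ _
  have hdecomp : f = fun ω => max (f ω) 0 - max (-f ω) 0 := by
    ext ω
    rcases le_total (f ω) 0 with hω | hω <;> simp [hω]
  rw [hdecomp]
  exact ⟨hpi.sub hni, by rw [integral_sub hpi hni, h.map_sub hp hn, hpe, hne]⟩

/-- A functional with the Daniell property is represented by a finitely additive measure that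
extends its normalized Daniell measure. -/
theorem exists_representing (h : IsPositiveOnLattice L φ) (hφ : IsDaniell L φ) :
    ∃ (m : FinAddMeasure Ω) (μ : @Measure Ω (generatedSigmaAlgebra L)),
      IsFiniteMeasure μ ∧
      (∀ E, MeasurableSet[generatedSigmaAlgebra L] E → μ E = ENNReal.ofReal (m.μ E)) ∧
      ∀ f ∈ L, Integrable f μ ∧ φ f = (φ fun _ => 1) * ∫ ω, f ω ∂μ := by
  let _ : MeasurableSpace Ω := generatedSigmaAlgebra L
  have := h.isFiniteMeasure_daniellMeasure
  let ν : Measure Ω := ENNReal.ofReal (φ fun _ => 1)⁻¹ • h.daniellMeasure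
  have hν : IsFiniteMeasure ν := Measure.smul_finite _ ENNReal.ofReal_ne_top
  obtain ⟨m, hm⟩ := exists_finAddMeasure_extension ν
  refine ⟨m, ν, hν, hm, fun f hf => ?_⟩
  obtain ⟨hfi, hfe⟩ := h.integrable_and_integral_eq hφ hf
  refine ⟨hfi.smul_measure ENNReal.ofReal_ne_top, ?_⟩
  have hone := h.nonneg _ h.one_mem fun _ => zero_le_one
  rw [integral_smul_measure, ENNReal.toReal_ofReal (inv_nonneg.2 hone), hfe, smul_eq_mul]
  by_cases h1 : (φ fun _ => 1) = 0
  · have hzero : h.daniellMeasure = 0 := by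
      rw [← Measure.measure_univ_eq_zero, h.daniellMeasure_univ hφ, h1, ENNReal.ofReal_zero]
    rw [h1, zero_mul, ← hfe, hzero, integral_zero_measure]
  · rw [mul_inv_cancel_left₀ h1]

end IsPositiveOnLattice

namespace FinAddMeasure

variable {Ω : Type*} [MeasurableSpace Ω]

theorem hasSum_iUnion {m : FinAddMeasure Ω} {μ : Measure Ω} [IsFiniteMeasure μ]
    (hm : ∀ E, MeasurableSet E → μ E = ENNReal.ofReal (m.μ E)) {E : ℕ → Set Ω}
    (hE : ∀ n, MeasurableSet (E n)) (hd : Pairwise (Function.onFun Disjoint E)) :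
    HasSum (fun n => m.μ (E n)) (m.μ (⋃ n, E n)) := by
  have hreal : ∀ F, MeasurableSet F → m.μ F = (μ F).toReal := fun F hF => by
    rw [hm F hF, ENNReal.toReal_ofReal (m.nonneg F)]
  have hU := measure_iUnion (μ := μ) hd hE
  have htop : ∑' n, μ (E n) ≠ ∞ := hU ▸ measure_ne_top μ _
  simp only [hreal _ (hE _), hreal _ (MeasurableSet.iUnion hE), hU]
  rw [ENNReal.tsum_toReal_eq fun n => measure_ne_top μ (E n)]
  exact ENNReal.hasSum_toReal htop

/-- A finitely additive measure that is countably additive on a σ-algebra restricts to a measure. -/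
theorem exists_measure_eq (m : FinAddMeasure Ω)
    (hm : ∀ E : ℕ → Set Ω, (∀ n, MeasurableSet (E n)) → Pairwise (Function.onFun Disjoint E) →
      HasSum (fun n => m.μ (E n)) (m.μ (⋃ n, E n))) :
    ∃ μ : Measure Ω, ∀ E, MeasurableSet E → μ E = ENNReal.ofReal (m.μ E) := by
  refine ⟨Measure.ofMeasurable (fun E _ => ENNReal.ofReal (m.μ E)) (by simp [m.empty])
    fun E hE hd => ?_, fun E hE => Measure.ofMeasurable_apply E hE⟩
  have hs := hm E hE hd
  rw [← hs.tsum_eq, ENNReal.ofReal_tsum_of_nonneg (fun n => m.nonneg _) hs.summable]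

end FinAddMeasure

/-- Daniell: for a positive linear functional `φ` on a vector
sublattice `L ⊆ ℝ^Ω` with `1 ∈ L`, `φ(f_n) → 0` along every sequence in `L`
decreasing pointwise to `0` iff `φ` admits a representing measure
(`L ⊆ L(m)`, `φ(f) = φ(1)·m(f)`) whose restriction to the σ-algebra generated
by `L` is countably additive. -/
theorem daniell_representation {Ω : Type*} [Nonempty Ω]
    (L : Set (Ω → ℝ))
    (hLadd : ∀ f ∈ L, ∀ g ∈ L, f + g ∈ L)
    (hLsmul : ∀ (c : ℝ), ∀ f ∈ L, c • f ∈ L)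
    (hLsup : ∀ f ∈ L, ∀ g ∈ L, (fun ω => max (f ω) (g ω)) ∈ L)
    (h1 : (fun _ => (1 : ℝ)) ∈ L)
    (φ : (Ω → ℝ) → ℝ)
    (hφadd : ∀ f ∈ L, ∀ g ∈ L, φ (f + g) = φ f + φ g)
    (hφsmul : ∀ (c : ℝ), ∀ f ∈ L, φ (c • f) = c * φ f)
    (hφpos : ∀ f ∈ L, (∀ ω, 0 ≤ f ω) → 0 ≤ φ f) :
    (∀ fs : ℕ → Ω → ℝ, (∀ n, fs n ∈ L) →
        (∀ n ω, fs (n + 1) ω ≤ fs n ω) →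
        (∀ ω, Filter.Tendsto (fun n => fs n ω) Filter.atTop (nhds 0)) →
        Filter.Tendsto (fun n => φ (fs n)) Filter.atTop (nhds 0)) ↔
    (∃ m : FinAddMeasure Ω,
      (∀ f ∈ L, FAIntegrable m f) ∧
      (∀ f ∈ L, φ f = φ (fun _ => (1 : ℝ)) * faInt m f) ∧
      (∀ E : ℕ → Set Ω,
        (∀ n, @MeasurableSet Ω (⨆ f ∈ L, MeasurableSpace.comap f Real.measurableSpace) (E n)) →
        Pairwise (Function.onFun Disjoint E) →
        HasSum (fun n => m.μ (E n)) (m.μ (⋃ n, E n)))) := by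
  let _ : MeasurableSpace Ω := generatedSigmaAlgebra L
  constructor
  · intro hφ
    have h : IsPositiveOnLattice L φ :=
      ⟨hLadd, hLsmul, hLsup, h1, hφadd, hφsmul, hφpos⟩
    obtain ⟨m, μ, _, hm, hrep⟩ := h.exists_representing hφ
    refine ⟨m, fun f hf => ?_, fun f hf => ?_, fun E hE hd => m.hasSum_iUnion hm hE hd⟩
    · exact (faIntegrable_iff_integrable hm (measurable_of_mem hf)).2 (hrep f hf).1
    · rw [faInt_eq_integral hm (measurable_of_mem hf) (hrep f hf).1]
      exact (hrep f hf).2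
  · rintro ⟨m, hintegral, hrep, hsum⟩ fs hfs hanti hlim
    obtain ⟨μ, hm⟩ := m.exists_measure_eq hsum
    have hmeas : ∀ f ∈ L, Measurable f := fun f hf => measurable_of_mem hf
    have hfi : ∀ f ∈ L, Integrable f μ := fun f hf =>
      (faIntegrable_iff_integrable hm (hmeas f hf)).1 (hintegral f hf)
    have hφ : ∀ n, φ (fs n) = (φ fun _ => 1) * ∫ ω, fs n ω ∂μ := fun n => by
      rw [hrep _ (hfs n), faInt_eq_integral hm (hmeas _ (hfs n)) (hfi _ (hfs n))]
    have hanti' : ∀ ω, Antitone fun n => fs n ω := fun ω => antitone_nat_of_succ_le (hanti · ω)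
    have htend := tendsto_integral_of_dominated_convergence (μ := μ) (F := fs) (f := fun _ => 0)
      (fs 0) (fun n => (hmeas _ (hfs n)).aestronglyMeasurable) (hfi _ (hfs 0))
      (fun n => .of_forall fun ω => by
        rw [Real.norm_of_nonneg ((hanti' ω).le_of_tendsto (hlim ω) n)]
        exact hanti' ω n.zero_le)
      (.of_forall hlim)
    simp only [hφ]
    simpa using htend.const_mul (φ fun _ => 1)
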